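/- There exist constants b > 0 and γ₀ > 0, depending only on the dimension d, such that for every 0 < γ ≤ γ₀ the following holds: for every 0 < δ ≤ γ^{1/4}, every finite rectangle Λ ⊂ ℤ^d, and every E ∈ ℝ, letting N(I) denote the number of eigenvalues of H(u), counted with multiplicity, lying in the interval I = [E − δ/2, E + δ/2], one has 𝔼 N(I) ≤ 4·|Λ|·exp(−b·|log γ|^{2/3}·|log δ|^{1/3}). -/

import Mathlib

open Matrix MeasureTheory

/-- The uniform probability measure on `[-1,1]`. -/
noncomputable def unif : Measure ℝ :=
  ((2 : NNReal))⁻¹ • (volume.restrict (Set.Icc (-1 : ℝ) 1))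

instance : IsProbabilityMeasure unif := by
  constructor
  rw [unif, Measure.smul_apply, Measure.restrict_apply_univ, Real.volume_Icc]
  norm_num
  rw [ENNReal.smul_def]
  simp [ENNReal.inv_mul_cancel]

/-- The product of uniform measures on `[-1,1]^ι` (i.i.d. uniform random variables). -/
noncomputable def unifPi (ι : Type*) [Fintype ι] : Measure (ι → ℝ) :=
  Measure.pi fun _ => unif

/-- The ℓ¹ distance `|x-y| = Σᵢ |xᵢ-yᵢ|` on `ℤ^d`, as a natural number. -/
def dist1 {d : ℕ} (x y : Fin d → ℤ) : ℕ := ∑ i, (x i - y i).natAbs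

/-- The random block Hamiltonian: diagonal 2×2 block `[[u_x,1],[1,-u_x]]` at each
position `x ∈ Λ`, and block `γ·I₂` between nearest-neighbor positions. -/
noncomputable def Ham (d : ℕ) (γ : ℝ) (Λ : Finset (Fin d → ℤ)) (u : {x // x ∈ Λ} → ℝ) :
    Matrix ({x // x ∈ Λ} × Fin 2) ({x // x ∈ Λ} × Fin 2) ℝ := fun s t =>
  if s.1 = t.1 then
    (if s.2 = t.2 then (if s.2 = 0 then u s.1 else -u s.1) else 1)
  else if dist1 (s.1 : Fin d → ℤ) (t.1 : Fin d → ℤ) = 1 then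
    (if s.2 = t.2 then γ else 0)
  else 0

/-- The number of eigenvalues of `H(u)`, counted with multiplicity (i.e. real roots of
the characteristic polynomial with multiplicity), in `[E - δ/2, E + δ/2]`. -/
noncomputable def eigCount (d : ℕ) (γ : ℝ) (Λ : Finset (Fin d → ℤ))
    (u : {x // x ∈ Λ} → ℝ) (E δ : ℝ) : ℕ :=
  Multiset.card ((Ham d γ Λ u).charpoly.roots.filter
    (fun r => E - δ / 2 ≤ r ∧ r ≤ E + δ / 2))

open scoped ENNReal NNReal Polynomial Kronecker

/-!
The proof is the fractional moment method. If `h` is the block with potential `u`, then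
`h ^ 2 = 1 + u ^ 2` is scalar, so the resolvent equation gives
`(1 + u ^ 2 - z ^ 2) G(x, ·) = (h + z) (1 - K G)(x, ·)`, with `K` the hopping. As a function of one
potential an entry of `G` is a quotient of polynomials of degree at most `2`, because the potential
enters through a perturbation of rank `2`. For small `r`, averaging over that potential therefore
decouples the singular factor `|1 + u ^ 2 - z ^ 2| ^ (-r)` from `|G| ^ r`, whereas `K` contributes
`O(γ ^ r)`. For small `γ` the supremum of `𝔼 |G| ^ r` is then at most a constant plus half itself,
hence bounded uniformly in `Λ` and in `z` off the real axis.

Normalising polynomials by their Mahler measure makes the decoupling uniform in their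
coefficients: a polynomial factors into linear ones, and for these only the singularity of
`|u - a| ^ (-s)` matters.

With `z = E + iη` and `η = δ / 2`, each eigenvalue of the window contributes at least `1 / (2η)` to
`Im tr G`, while `η |G| ≤ 1`, so the expected count is at most a multiple of
`|Λ| η ^ r 𝔼 |G| ^ r`, that is of `|Λ| δ ^ r`. For `δ ≤ γ ^ (1 / 4)` this power is already smaller
than the claimed bound, as `|log γ| ≤ 4 |log δ|`.
-/

/-- Probability measures on `[-1, 1]` whose singular integrals of order `s` are bounded uniformly
in the position of the singularity. This is the only information about the distribution of a single
potential that the fractional moment method uses. The power is taken in `ℝ≥0∞`, where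
`0 ^ (-s) = ∞`, so that for `s > 0` the measure has no atoms. -/
structure IsFractionallyRegular (μ : Measure ℝ) (s : ℝ) : Prop where
  ae_mem_Icc : ∀ᵐ u ∂μ, u ∈ Set.Icc (-1 : ℝ) 1
  exists_lintegral_le : ∃ A : ℝ≥0, ∀ a : ℝ, ∫⁻ u, ‖u - a‖ₑ ^ (-s) ∂μ ≤ A

lemma unif_le_volume_restrict : unif ≤ volume.restrict (Set.Icc (-1) 1) := by
  intro t
  rw [unif, Measure.smul_apply, ENNReal.smul_def, smul_eq_mul]
  refine mul_le_of_le_one_left zero_le ?_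
  exact_mod_cast inv_le_one_of_one_le₀ (by norm_num : (1 : ℝ≥0) ≤ 2)

lemma lintegral_enorm_rpow_neg_lt_top {s : ℝ} (hs : s < 1) :
    ∫⁻ x in Set.Icc (-1 : ℝ) 1, ‖x‖ₑ ^ (-s) < ∞ := by
  have hint : LocallyIntegrable (fun x : ℝ => ‖x‖ ^ (-s)) volume :=
    locallyIntegrable_of_norm_le_rpow (C := 1) (α := s) (by simp) (by simpa using hs)
      (.of_forall fun x => by simp [abs_of_nonneg (Real.rpow_nonneg (abs_nonneg x) _)])
      (measurable_norm.pow_const _).aestronglyMeasurable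
  refine lt_of_le_of_lt (lintegral_mono_ae ?_) (hint.integrableOn_isCompact isCompact_Icc).2
  filter_upwards [ae_restrict_of_ae (Measure.ae_ne volume (0 : ℝ))] with x hx
  rw [Real.enorm_eq_ofReal (by positivity : 0 ≤ ‖x‖ ^ (-s)),
    ← ENNReal.ofReal_rpow_of_pos (norm_pos_iff.2 hx), ofReal_norm]

lemma isFractionallyRegular_unif {s : ℝ} (hs₀ : 0 < s) (hs₁ : s < 1) :
    IsFractionallyRegular unif s where
  ae_mem_Icc := (Measure.absolutelyContinuous_of_le unif_le_volume_restrict).ae_le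
    (ae_restrict_mem measurableSet_Icc)
  exists_lintegral_le := by
    set f : ℝ → ℝ≥0∞ := (Set.Icc (-1) 1).indicator fun x => ‖x‖ₑ ^ (-s) with hf
    have hf_int : ∫⁻ x, f x ≠ ∞ := by
      rw [hf, lintegral_indicator measurableSet_Icc]
      exact (lintegral_enorm_rpow_neg_lt_top hs₁).ne
    have hle (x : ℝ) : ‖x‖ₑ ^ (-s) ≤ f x + 1 := by
      by_cases hx : x ∈ Set.Icc (-1 : ℝ) 1
      · exact ((Set.indicator_of_mem hx fun y : ℝ => ‖y‖ₑ ^ (-s)).ge).trans le_self_add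
      · have : 1 ≤ ‖x‖ₑ := by
          rw [Real.enorm_eq_ofReal_abs, ENNReal.one_le_ofReal]
          exact (not_le.1 fun h => hx (abs_le.1 h)).le
        exact (ENNReal.rpow_le_one_of_one_le_of_neg this (by linarith)).trans le_add_self
    refine ⟨(∫⁻ x, f x).toNNReal + 1, fun a => ?_⟩
    calc ∫⁻ u, ‖u - a‖ₑ ^ (-s) ∂unif
        ≤ ∫⁻ u, (f (u - a) + 1) ∂unif := lintegral_mono fun u => hle (u - a)
      _ = (∫⁻ u, f (u - a) ∂unif) + 1 := by simp [lintegral_add_right]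
      _ ≤ (∫⁻ u, f (u - a)) + 1 := by
        gcongr
        exact unif_le_volume_restrict.trans Measure.restrict_le_self
      _ = ↑((∫⁻ x, f x).toNNReal + 1) := by
        rw [lintegral_sub_right_eq_self f a]
        simp [ENNReal.coe_toNNReal hf_int]

namespace IsFractionallyRegular

variable {μ : Measure ℝ} {s : ℝ}

lemma ae_ne (hμ : IsFractionallyRegular μ s) (hs : 0 < s) (a : ℝ) : ∀ᵐ u ∂μ, u ≠ a := by
  obtain ⟨A, hA⟩ := hμ.exists_lintegral_le
  filter_upwards [ae_lt_top (by fun_prop) ((hA a).trans_lt ENNReal.coe_lt_top).ne] with u hu hua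
  simp [hua, hs] at hu

end IsFractionallyRegular

lemma multiset_prod_rpow_le_one_add_sum {ι : Type*} (R : Multiset ι) (g : ι → ℝ≥0∞) {s t : ℝ}
    (hs : 0 < s) (ht : 0 ≤ t) (hR : R.card * t ≤ s) :
    (R.map g).prod ^ t ≤ 1 + (R.map fun i => g i ^ s).sum := by
  set S := 1 + (R.map fun i => g i ^ s).sum
  have hg : ∀ y ∈ R.map g, y ≤ S ^ s⁻¹ := by
    simp only [Multiset.mem_map, forall_exists_index, and_imp, forall_apply_eq_imp_iff₂]
    intro i hi
    rw [ENNReal.le_rpow_inv_iff hs]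
    exact (Multiset.single_le_sum (fun _ _ => zero_le) _
      (Multiset.mem_map_of_mem (fun i => g i ^ s) hi)).trans le_add_self
  calc (R.map g).prod ^ t ≤ ((S ^ s⁻¹) ^ R.card) ^ t := by
        gcongr
        simpa using Multiset.prod_le_pow_card _ _ hg
    _ = S ^ (R.card * t / s) := by
        rw [← ENNReal.rpow_natCast, ← ENNReal.rpow_mul, ← ENNReal.rpow_mul]
        congr 1
        ring
    _ ≤ S := by
        simpa using ENNReal.rpow_le_rpow_of_exponent_le (le_self_add : 1 ≤ S) ((div_le_one hs).2 hR)

lemma sum_rpow_le_sum_rpow {ι : Type*} (T : Finset ι) (f : ι → ℝ≥0∞) {r : ℝ} (hr₀ : 0 < r)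
    (hr₁ : r ≤ 1) : (∑ i ∈ T, f i) ^ r ≤ ∑ i ∈ T, f i ^ r :=
  Finset.le_sum_of_subadditive (· ^ r) (ENNReal.zero_rpow_of_pos hr₀).le
    (fun x y => ENNReal.rpow_add_le_add_rpow x y hr₀.le hr₁) T f

section LIntegral

variable {Ω : Type*} [MeasurableSpace Ω] {μ : Measure Ω}

lemma lintegral_multiset_sum_le {ι : Type*} (R : Multiset ι) {f : ι → Ω → ℝ≥0∞} {c : ℝ≥0∞}
    (hf : ∀ i, Measurable (f i)) (hc : ∀ i, ∫⁻ x, f i x ∂μ ≤ c) :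
    ∫⁻ x, (R.map fun i => f i x).sum ∂μ ≤ R.card * c := by
  induction R using Multiset.induction_on with
  | empty => simp
  | cons i R ih =>
    simp only [Multiset.map_cons, Multiset.sum_cons, Multiset.card_cons]
    rw [lintegral_add_left (hf i), Nat.cast_succ, add_comm, add_one_mul]
    gcongr
    exact hc i

lemma le_lintegral_mul_lintegral [IsProbabilityMeasure μ] {f g : Ω → ℝ≥0∞} {c : ℝ≥0∞}
    (hf : AEMeasurable f μ) (hg : AEMeasurable g μ) (h : ∀ᵐ x ∂μ, c ≤ f x * g x) :
    c ≤ (∫⁻ x, f x ∂μ) * ∫⁻ x, g x ∂μ := by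
  have hhalf : (0 : ℝ) < 1 / 2 := by norm_num
  refine (ENNReal.rpow_le_rpow_iff hhalf).1 ?_
  calc c ^ (1 / 2 : ℝ) = ∫⁻ _, c ^ (1 / 2 : ℝ) ∂μ := by simp
    _ ≤ ∫⁻ x, f x ^ (1 / 2 : ℝ) * g x ^ (1 / 2 : ℝ) ∂μ := by
        refine lintegral_mono_ae (h.mono fun x hx => ?_)
        rw [← ENNReal.mul_rpow_of_nonneg _ _ hhalf.le]
        gcongr
    _ ≤ (∫⁻ x, f x ∂μ) ^ (1 / 2 : ℝ) * (∫⁻ x, g x ∂μ) ^ (1 / 2 : ℝ) :=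
        ENNReal.lintegral_mul_norm_pow_le hf hg hhalf.le hhalf.le (by norm_num)
    _ = ((∫⁻ x, f x ∂μ) * ∫⁻ x, g x ∂μ) ^ (1 / 2 : ℝ) :=
        (ENNReal.mul_rpow_of_nonneg _ _ hhalf.le).symm

end LIntegral

/-- The Mahler measure of `p` divided by `|p u|`: how far `p` is, at `u`, below its typical size.
The quotient is taken in `ℂ`, so the value at a root is `0`; since `x ↦ ‖x⁻¹‖ₑ` is then
multiplicative without exception, so is `mahlerRatio`. -/
noncomputable def mahlerRatio (p : ℂ[X]) (u : ℝ) : ℝ≥0∞ :=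
  ‖(p.mahlerMeasure : ℂ) / p.eval (u : ℂ)‖ₑ

@[fun_prop]
lemma measurable_mahlerRatio (p : ℂ[X]) : Measurable (mahlerRatio p) := by
  have : Measurable fun u : ℝ => p.eval (u : ℂ) := by fun_prop
  unfold mahlerRatio
  fun_prop

lemma mahlerRatio_mul (p q : ℂ[X]) (u : ℝ) :
    mahlerRatio (p * q) u = mahlerRatio p u * mahlerRatio q u := by
  simp only [mahlerRatio, Polynomial.mahlerMeasure_mul, Polynomial.eval_mul, Complex.ofReal_mul,
    mul_div_mul_comm, enorm_mul]

lemma mahlerRatio_multiset_prod (S : Multiset ℂ[X]) (u : ℝ) :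
    mahlerRatio S.prod u = (S.map (mahlerRatio · u)).prod := by
  induction S using Multiset.induction_on with
  | empty => simp [mahlerRatio]
  | cons p S ih => simp [mahlerRatio_mul, ih]

lemma mahlerRatio_le_prod_roots (p : ℂ[X]) (u : ℝ) :
    mahlerRatio p u ≤ (p.roots.map fun α => mahlerRatio (.X - .C α) u).prod := by
  have hconst : mahlerRatio (.C p.leadingCoeff) u ≤ 1 := by
    rcases eq_or_ne p.leadingCoeff 0 with h | h <;> simp [mahlerRatio, ← ofReal_norm, h]
  calc mahlerRatio p u
      = mahlerRatio (.C p.leadingCoeff) u *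
          (p.roots.map fun α => mahlerRatio (.X - .C α) u).prod := by
        conv_lhs => rw [(IsAlgClosed.splits p).eq_prod_roots]
        rw [mahlerRatio_mul, mahlerRatio_multiset_prod, Multiset.map_map]
        rfl
    _ ≤ _ := mul_le_of_le_one_left zero_le hconst

lemma max_one_norm_mul_min_le {u : ℝ} (hu : |u| ≤ 1) (α : ℂ) :
    max 1 ‖α‖ * min 1 |u - α.re| ≤ 2 * ‖u - α‖ := by
  rcases le_total ‖α‖ 2 with hα | hα
  · calc max 1 ‖α‖ * min 1 |u - α.re| ≤ 2 * |u - α.re| := by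
          gcongr
          exacts [max_le one_le_two hα, min_le_right _ _]
      _ ≤ 2 * ‖u - α‖ := by
          gcongr
          simpa using Complex.abs_re_le_norm (u - α)
  · calc max 1 ‖α‖ * min 1 |u - α.re| ≤ ‖α‖ * 1 := by
          gcongr
          exacts [max_le (by linarith) le_rfl, min_le_left _ _]
      _ ≤ 2 * (‖α‖ - ‖(u : ℂ)‖) := by
          rw [Complex.norm_real, Real.norm_eq_abs]
          linarith
      _ ≤ 2 * ‖u - α‖ := by
          gcongr
          rw [norm_sub_rev]
          exact norm_sub_norm_le _ _

lemma mahlerRatio_X_sub_C_le {u : ℝ} (hu : |u| ≤ 1) (α : ℂ) :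
    mahlerRatio (.X - .C α) u ≤ 2 * max 1 ‖u - α.re‖ₑ⁻¹ := by
  rcases eq_or_ne u α.re with h | h
  · simp [h]
  have hα : 0 < ‖u - α‖ :=
    norm_pos_iff.2 (sub_ne_zero.2 fun hα => h (by simpa using congrArg Complex.re hα))
  have hre : 0 < |u - α.re| := abs_pos.2 (sub_ne_zero.2 h)
  have hle : max 1 ‖α‖ / ‖u - α‖ ≤ 2 * max 1 |u - α.re|⁻¹ := by
    rw [div_le_iff₀ hα]
    calc max 1 ‖α‖
        = (max 1 ‖α‖ * min 1 |u - α.re|) * max 1 |u - α.re|⁻¹ := by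
          rcases le_total 1 |u - α.re| with h1 | h1
          · rw [min_eq_left h1, max_eq_left (inv_le_one_of_one_le₀ h1), mul_one, mul_one]
          · rw [min_eq_right h1, max_eq_right ((one_le_inv₀ hre).2 h1),
              mul_inv_cancel_right₀ hre.ne']
      _ ≤ (2 * ‖u - α‖) * max 1 |u - α.re|⁻¹ := by
          gcongr ?_ * _
          exact max_one_norm_mul_min_le hu α
      _ = _ := by ring
  calc mahlerRatio (.X - .C α) u = ENNReal.ofReal (max 1 ‖α‖ / ‖u - α‖) := by
        simp [mahlerRatio, ← ofReal_norm, abs_of_pos (lt_max_of_lt_left one_pos)]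
    _ ≤ ENNReal.ofReal (2 * max 1 |u - α.re|⁻¹) := ENNReal.ofReal_le_ofReal hle
    _ = 2 * max 1 ‖u - α.re‖ₑ⁻¹ := by
        rw [ENNReal.ofReal_mul two_pos.le, ENNReal.ofReal_max, ENNReal.ofReal_inv_of_pos hre,
          Real.enorm_eq_ofReal_abs]
        simp

lemma enorm_eval_div_mahlerMeasure_le {n : ℕ} {p : ℂ[X]} (hp : p.natDegree ≤ n) {u : ℝ}
    (hu : |u| ≤ 1) : ‖p.eval (u : ℂ) / p.mahlerMeasure‖ₑ ≤ 2 ^ n := by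
  have hle : ‖p.eval (u : ℂ)‖ ≤ 2 ^ n * p.mahlerMeasure := by
    calc ‖p.eval (u : ℂ)‖
        ≤ ∑ i ∈ Finset.range (p.natDegree + 1), p.natDegree.choose i * p.mahlerMeasure := by
          rw [Polynomial.eval_eq_sum_range]
          refine norm_sum_le_of_le _ fun i _ => ?_
          rw [norm_mul, norm_pow, Complex.norm_real, Real.norm_eq_abs]
          exact (mul_le_of_le_one_right (norm_nonneg _) (pow_le_one₀ (abs_nonneg u) hu)).trans
            (p.norm_coeff_le_choose_mul_mahlerMeasure i)
      _ = 2 ^ p.natDegree * p.mahlerMeasure := by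
          rw [← Finset.sum_mul]
          exact_mod_cast congrArg (fun k : ℕ => (k : ℝ) * p.mahlerMeasure) (Nat.sum_range_choose _)
      _ ≤ 2 ^ n * p.mahlerMeasure := by
          gcongr
          exacts [p.mahlerMeasure_nonneg, one_le_two]
  rw [← ofReal_norm, norm_div, Complex.norm_real, Real.norm_of_nonneg p.mahlerMeasure_nonneg]
  refine ENNReal.ofReal_le_of_le_toReal ?_
  simpa using div_le_of_le_mul₀ p.mahlerMeasure_nonneg (by positivity) hle

namespace IsFractionallyRegular

variable {μ : Measure ℝ} {s : ℝ}

lemma ae_eval_ne_zero (hμ : IsFractionallyRegular μ s) (hs : 0 < s) {p : ℂ[X]} (hp : p ≠ 0) :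
    ∀ᵐ u : ℝ ∂μ, p.eval (u : ℂ) ≠ 0 := by
  have : ∀ α ∈ p.roots.toFinset, ∀ᵐ u ∂μ, u ≠ α.re := fun α _ => hμ.ae_ne hs α.re
  filter_upwards [(Filter.eventually_all_finset _).2 this] with u hu hpu
  exact hu u (by simp [hp, hpu]) (Complex.ofReal_re u).symm

variable [IsProbabilityMeasure μ]

lemma exists_lintegral_mahlerRatio_X_sub_C_le (hμ : IsFractionallyRegular μ s) (hs : 0 < s) :
    ∃ A : ℝ≥0, ∀ α : ℂ, ∫⁻ u, mahlerRatio (.X - .C α) u ^ s ∂μ ≤ A := by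
  obtain ⟨A, hA⟩ := hμ.exists_lintegral_le
  refine ⟨2 ^ s * (1 + A), fun α => ?_⟩
  calc ∫⁻ u, mahlerRatio (.X - .C α) u ^ s ∂μ
      ≤ ∫⁻ u, 2 ^ s * (1 + ‖u - α.re‖ₑ ^ (-s)) ∂μ := by
        refine lintegral_mono_ae (hμ.ae_mem_Icc.mono fun u hu => ?_)
        calc mahlerRatio (.X - .C α) u ^ s ≤ (2 * max 1 ‖u - α.re‖ₑ⁻¹) ^ s := by
              gcongr
              exact mahlerRatio_X_sub_C_le (abs_le.2 hu) α
          _ = 2 ^ s * max 1 (‖u - α.re‖ₑ ^ (-s)) := by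
              rw [ENNReal.mul_rpow_of_nonneg _ _ hs.le,
                (ENNReal.monotone_rpow_of_nonneg hs.le).map_max, ENNReal.one_rpow,
                ENNReal.inv_rpow, ENNReal.rpow_neg]
          _ ≤ 2 ^ s * (1 + ‖u - α.re‖ₑ ^ (-s)) := by
              gcongr
              exact max_le_add_of_nonneg zero_le zero_le
    _ ≤ 2 ^ s * (1 + A) := by
        rw [lintegral_const_mul _ (by fun_prop), lintegral_add_left measurable_const]
        simp only [lintegral_const, measure_univ, mul_one]
        gcongr
        exact hA α.re
    _ = _ := by simp [ENNReal.coe_rpow_of_nonneg _ hs.le]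

lemma exists_lintegral_mahlerRatio_le (hμ : IsFractionallyRegular μ s) (hs : 0 < s) (n : ℕ) {t : ℝ}
    (ht : 0 ≤ t) (hnt : n * t ≤ s) :
    ∃ B : ℝ≥0, ∀ p : ℂ[X], p.natDegree ≤ n → ∫⁻ u, mahlerRatio p u ^ t ∂μ ≤ B := by
  obtain ⟨A, hA⟩ := hμ.exists_lintegral_mahlerRatio_X_sub_C_le hs
  refine ⟨1 + n * A, fun p hp => ?_⟩
  have hcard : p.roots.card ≤ n := p.card_roots'.trans hp
  calc ∫⁻ u, mahlerRatio p u ^ t ∂μ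
      ≤ ∫⁻ u, 1 + (p.roots.map fun α => mahlerRatio (.X - .C α) u ^ s).sum ∂μ := by
        refine lintegral_mono fun u => ?_
        refine (ENNReal.rpow_le_rpow (mahlerRatio_le_prod_roots p u) ht).trans ?_
        exact multiset_prod_rpow_le_one_add_sum _ _ hs ht (le_trans (by gcongr) hnt)
    _ ≤ 1 + p.roots.card * A := by
        rw [lintegral_add_left measurable_const]
        simpa using lintegral_multiset_sum_le p.roots (by fun_prop) hA
    _ ≤ (1 + n * A : ℝ≥0) := by
        push_cast
        gcongr

lemma exists_lintegral_mahlerRatio_mul_le (hμ : IsFractionallyRegular μ s) (hs : 0 < s) (n : ℕ)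
    {t : ℝ} (ht : 0 < t) (hnt : 2 * n * t ≤ s) :
    ∃ B : ℝ≥0, ∀ e p q : ℂ[X], e.natDegree ≤ n → p.natDegree ≤ n → q.natDegree ≤ n →
      ∫⁻ u : ℝ, mahlerRatio e u ^ t * ‖p.eval (u : ℂ) / q.eval (u : ℂ)‖ₑ ^ t ∂μ ≤
        B * ‖(p.mahlerMeasure / q.mahlerMeasure : ℂ)‖ₑ ^ t := by
  obtain ⟨B, hB⟩ := hμ.exists_lintegral_mahlerRatio_le hs (2 * n) ht.le (mod_cast hnt)
  refine ⟨B * (2 ^ n) ^ t, fun e p q he hp hq => ?_⟩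
  set m := ‖(p.mahlerMeasure / q.mahlerMeasure : ℂ)‖ₑ
  have hdiv : ∀ᵐ u : ℝ ∂μ, ‖p.eval (u : ℂ) / q.eval (u : ℂ)‖ₑ ≤ 2 ^ n * m * mahlerRatio q u := by
    filter_upwards [hμ.ae_mem_Icc] with u hu
    rcases eq_or_ne p 0 with rfl | hp₀
    · simp
    rcases eq_or_ne q 0 with rfl | hq₀
    · simp
    have hMp : (p.mahlerMeasure : ℂ) ≠ 0 := by simpa
    have hMq : (q.mahlerMeasure : ℂ) ≠ 0 := by simpa
    calc ‖p.eval (u : ℂ) / q.eval (u : ℂ)‖ₑ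
        = ‖p.eval (u : ℂ) / p.mahlerMeasure‖ₑ * m * mahlerRatio q u := by
          rw [mahlerRatio, ← enorm_mul, ← enorm_mul, div_mul_div_cancel₀ hMp,
            div_mul_div_cancel₀ hMq]
      _ ≤ _ := by
          gcongr
          exact enorm_eval_div_mahlerMeasure_le hp (abs_le.2 hu)
  calc ∫⁻ u : ℝ, mahlerRatio e u ^ t * ‖p.eval (u : ℂ) / q.eval (u : ℂ)‖ₑ ^ t ∂μ
      ≤ ∫⁻ u, (2 ^ n * m) ^ t * mahlerRatio (e * q) u ^ t ∂μ := by
        refine lintegral_mono_ae (hdiv.mono fun u hu => ?_)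
        rw [← ENNReal.mul_rpow_of_nonneg _ _ ht.le, ← ENNReal.mul_rpow_of_nonneg _ _ ht.le,
          mahlerRatio_mul, mul_left_comm]
        gcongr
    _ ≤ (2 ^ n * m) ^ t * B := by
        rw [lintegral_const_mul _ (by fun_prop)]
        gcongr
        exact hB _ (Polynomial.natDegree_mul_le.trans (by omega))
    _ = _ := by
        rw [ENNReal.mul_rpow_of_nonneg _ _ ht.le, ENNReal.coe_mul,
          ENNReal.coe_rpow_of_nonneg _ ht.le]
        push_cast
        ring

lemma exists_mahlerMeasure_div_le (hμ : IsFractionallyRegular μ s) (hs : 0 < s) (n : ℕ)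
    {t : ℝ} (ht : 0 < t) (hnt : n * t ≤ s) :
    ∃ B : ℝ≥0, ∀ p q : ℂ[X], p.natDegree ≤ n → q.natDegree ≤ n →
      ‖(p.mahlerMeasure / q.mahlerMeasure : ℂ)‖ₑ ^ t ≤
        B * ∫⁻ u : ℝ, ‖p.eval (u : ℂ) / q.eval (u : ℂ)‖ₑ ^ t ∂μ := by
  obtain ⟨B, hB⟩ := hμ.exists_lintegral_mahlerRatio_le hs n ht.le hnt
  refine ⟨(2 ^ n) ^ t * B, fun p q hp hq => ?_⟩
  rcases eq_or_ne p 0 with rfl | hp₀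
  · simp [ht]
  rcases eq_or_ne q 0 with rfl | hq₀
  · simp [ht]
  have hdiv : ∀ᵐ u : ℝ ∂μ, ‖(p.mahlerMeasure / q.mahlerMeasure : ℂ)‖ₑ ^ t ≤
      ((2 ^ n) ^ t * mahlerRatio p u ^ t) * ‖p.eval (u : ℂ) / q.eval (u : ℂ)‖ₑ ^ t := by
    filter_upwards [hμ.ae_mem_Icc, hμ.ae_eval_ne_zero hs hp₀, hμ.ae_eval_ne_zero hs hq₀]
      with u hu hpu hqu
    rw [← ENNReal.mul_rpow_of_nonneg _ _ ht.le, ← ENNReal.mul_rpow_of_nonneg _ _ ht.le, mul_assoc,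
      mahlerRatio, ← enorm_mul, div_mul_div_cancel₀ hpu]
    gcongr
    calc ‖(p.mahlerMeasure / q.mahlerMeasure : ℂ)‖ₑ
        = ‖q.eval (u : ℂ) / q.mahlerMeasure‖ₑ * ‖p.mahlerMeasure / q.eval (u : ℂ)‖ₑ := by
          rw [← enorm_mul, mul_comm, div_mul_div_cancel₀ hqu]
      _ ≤ _ := by
          gcongr
          exact enorm_eval_div_mahlerMeasure_le hq (abs_le.2 hu)
  have hmeas (r : ℂ[X]) : Measurable fun u : ℝ => r.eval (u : ℂ) := by fun_prop
  refine (le_lintegral_mul_lintegral (by fun_prop) ?_ hdiv).trans ?_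
  · exact ((hmeas p).div (hmeas q)).enorm.pow_const t |>.aemeasurable
  rw [lintegral_const_mul _ (by fun_prop), ENNReal.coe_mul, ENNReal.coe_rpow_of_nonneg _ ht.le]
  push_cast
  gcongr
  exact hB p hp

end IsFractionallyRegular

/-- Averaging over one potential a fractional power of a rational function of it is not affected,
up to the factor `C`, by a further polynomial singularity: the decoupling inequality of the
fractional moment method, for rational functions of degree at most `n` and the exponent `t`. -/
def IsDecoupling (μ : Measure ℝ) (n : ℕ) (t : ℝ) (C : ℝ≥0) : Prop :=
  ∀ e p q : ℂ[X], e.natDegree ≤ n → p.natDegree ≤ n → q.natDegree ≤ n →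
    ∫⁻ u : ℝ, mahlerRatio e u ^ t * ‖p.eval (u : ℂ) / q.eval (u : ℂ)‖ₑ ^ t ∂μ ≤
      C * ∫⁻ u : ℝ, ‖p.eval (u : ℂ) / q.eval (u : ℂ)‖ₑ ^ t ∂μ

lemma IsFractionallyRegular.exists_isDecoupling {μ : Measure ℝ} [IsProbabilityMeasure μ] {s : ℝ}
    (hμ : IsFractionallyRegular μ s) (hs : 0 < s) (n : ℕ) {t : ℝ} (ht : 0 < t)
    (hnt : 2 * n * t ≤ s) : ∃ C, IsDecoupling μ n t C := by
  obtain ⟨B, hB⟩ := hμ.exists_lintegral_mahlerRatio_mul_le hs n ht hnt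
  obtain ⟨B', hB'⟩ := hμ.exists_mahlerMeasure_div_le hs n ht
    (le_trans (by nlinarith [mul_nonneg n.cast_nonneg ht.le]) hnt)
  refine ⟨B * B', fun e p q he hp hq => (hB e p q he hp hq).trans ?_⟩
  rw [ENNReal.coe_mul, mul_assoc]
  gcongr
  exact hB' p q hp hq

section Determinants

variable {n R : Type*} [Fintype n] [DecidableEq n] [CommRing R]

lemma natDegree_det_le_sum {M : Matrix n n R[X]} {d : n → ℕ} (hM : ∀ i j, (M i j).natDegree ≤ d i) :
    M.det.natDegree ≤ ∑ i, d i := by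
  rw [det_apply']
  refine Polynomial.natDegree_sum_le_of_forall_le _ _ fun σ _ => ?_
  calc (((Equiv.Perm.sign σ : ℤ) : R[X]) * ∏ i, M (σ i) i).natDegree
      ≤ (∏ i, M (σ i) i).natDegree := by
        simpa using Polynomial.natDegree_mul_le (p := ((Equiv.Perm.sign σ : ℤ) : R[X]))
    _ ≤ ∑ i, (M (σ i) i).natDegree := Polynomial.natDegree_prod_le _ _
    _ ≤ ∑ i, d (σ i) := Finset.sum_le_sum fun i _ => hM (σ i) i
    _ = ∑ i, d i := Equiv.sum_comp σ d

lemma natDegree_adjugate_le_sum {M : Matrix n n R[X]} {d : n → ℕ}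
    (hM : ∀ i j, (M i j).natDegree ≤ d i) (i j : n) : (M.adjugate i j).natDegree ≤ ∑ i, d i := by
  rw [adjugate_apply]
  refine natDegree_det_le_sum fun k l => ?_
  rw [updateRow_apply]
  split_ifs
  · rw [Pi.single_apply]
    split_ifs <;> simp
  · exact hM k l

lemma exists_inv_add_smul_apply_eq_div {K : Type*} [Field K] (A D : Matrix n n K) {S : Finset n}
    (hD : ∀ i ∉ S, ∀ j, D i j = 0) (i j : n) :
    ∃ p q : K[X], p.natDegree ≤ S.card ∧ q.natDegree ≤ S.card ∧
      ∀ τ, (A + τ • D)⁻¹ i j = p.eval τ / q.eval τ := by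
  set M : Matrix n n K[X] := A.map .C + (.X : K[X]) • D.map .C with hM
  have hdeg (k l : n) : (M k l).natDegree ≤ if k ∈ S then 1 else 0 := by
    have hM_apply : M k l = .C (A k l) + .X * .C (D k l) := by simp [hM]
    rw [hM_apply]
    split_ifs with hk
    · compute_degree
    · simp [hD k hk]
  have hcard : ∑ k, (if k ∈ S then 1 else 0) = S.card := by simp
  have heval (τ : K) : (Polynomial.evalRingHom τ).mapMatrix M = A + τ • D := by
    ext k l
    simp [hM, mul_comm τ]
  refine ⟨M.adjugate i j, M.det, hcard ▸ natDegree_adjugate_le_sum hdeg i j,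
    hcard ▸ natDegree_det_le_sum hdeg, fun τ => ?_⟩
  rw [inv_def, ← heval, ← RingHom.map_det, ← RingHom.map_adjugate]
  simp [Ring.inverse_eq_inv', div_eq_inv_mul]

end Determinants

section Resolvents

variable {n : Type*} [Fintype n] [DecidableEq n]

/-- The resolvent `(A - z)⁻¹`, whose entries are the Green function of `A` at the energy `z`. This
is the usual sign convention in spectral theory, opposite to that of `resolvent`. -/
noncomputable def green (A : Matrix n n ℂ) (z : ℂ) : Matrix n n ℂ := (A - z • 1)⁻¹

variable {A : Matrix n n ℂ} {z : ℂ}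

lemma ofReal_sub_ne_zero (hz : z.im ≠ 0) (r : ℝ) : (r - z : ℂ) ≠ 0 := fun h => hz <| by
  simpa using congrArg Complex.im h

lemma sub_smul_one_mul_conj_diagonal (hA : A.IsHermitian) (hz : z.im ≠ 0) :
    (A - z • 1) * Unitary.conjStarAlgAut ℂ _ hA.eigenvectorUnitary
      (diagonal fun k => (hA.eigenvalues k - z : ℂ)⁻¹) = 1 := by
  have hsub : A - z • 1 = Unitary.conjStarAlgAut ℂ _ hA.eigenvectorUnitary
      (diagonal (RCLike.ofReal ∘ hA.eigenvalues) - z • 1) := by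
    rw [map_sub, map_smul, map_one, ← hA.spectral_theorem]
  rw [hsub, ← map_mul, smul_one_eq_diagonal, diagonal_sub, diagonal_mul_diagonal]
  simp [mul_inv_cancel₀ (ofReal_sub_ne_zero hz _)]

lemma sub_smul_one_mul_green (hA : A.IsHermitian) (hz : z.im ≠ 0) :
    (A - z • 1) * green A z = 1 :=
  mul_nonsing_inv _ <| isUnit_det_of_right_inverse (sub_smul_one_mul_conj_diagonal hA hz)

lemma trace_green (hA : A.IsHermitian) (hz : z.im ≠ 0) :
    (green A z).trace = ∑ k, (hA.eigenvalues k - z : ℂ)⁻¹ := by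
  rw [green, inv_eq_right_inv (sub_smul_one_mul_conj_diagonal hA hz), Unitary.conjStarAlgAut_apply,
    trace_mul_cycle, Unitary.coe_star_mul_self, one_mul, trace_diagonal]

lemma green_sub_conjTranspose (hA : A.IsHermitian) (hz : z.im ≠ 0) :
    green A z - (green A z)ᴴ = (z - star z) • ((green A z)ᴴ * green A z) := by
  have hright := sub_smul_one_mul_green hA hz
  have hleft : (green A z)ᴴ * (A - star z • 1) = 1 := by
    simpa [conjTranspose_mul, hA.eq] using congrArg conjTranspose hright
  calc green A z - (green A z)ᴴ
      = (green A z)ᴴ * (A - star z • 1) * green A z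
          - (green A z)ᴴ * ((A - z • 1) * green A z) := by
        rw [hleft, hright, one_mul, mul_one]
    _ = (z - star z) • ((green A z)ᴴ * green A z) := by
        simp only [mul_sub, sub_mul, mul_assoc, smul_mul, Matrix.mul_smul, one_mul, sub_smul]
        abel

lemma im_green_apply_self (hA : A.IsHermitian) (hz : z.im ≠ 0) (t : n) :
    (green A z t t).im = z.im * ∑ r, ‖green A z r t‖ ^ 2 := by
  have hsum : ((green A z)ᴴ * green A z) t t = ((∑ r, ‖green A z r t‖ ^ 2 : ℝ) : ℂ) := by
    simp [mul_apply, Complex.conj_mul']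
  have h := congrArg Complex.im (congrFun₂ (green_sub_conjTranspose hA hz) t t)
  rw [Matrix.sub_apply, Matrix.smul_apply, conjTranspose_apply, hsum, smul_eq_mul,
    Complex.im_mul_ofReal, Complex.sub_im, Complex.sub_im, Complex.star_def,
    Complex.conj_im, Complex.conj_im] at h
  linarith

lemma mul_norm_green_le_one (hA : A.IsHermitian) (hz : 0 < z.im) (s t : n) :
    z.im * ‖green A z s t‖ ≤ 1 := by
  have hsq (r : n) : z.im * ‖green A z r t‖ ^ 2 ≤ ‖green A z t t‖ := by
    calc z.im * ‖green A z r t‖ ^ 2 ≤ z.im * ∑ r, ‖green A z r t‖ ^ 2 := by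
          gcongr
          exact Finset.single_le_sum (fun r _ => sq_nonneg ‖green A z r t‖) (Finset.mem_univ r)
      _ ≤ ‖green A z t t‖ := by
          rw [← im_green_apply_self hA hz.ne']
          exact (le_abs_self _).trans (Complex.abs_im_le_norm _)
  have hdiag : z.im * ‖green A z t t‖ ≤ 1 := by
    by_contra! h
    nlinarith [hsq t, norm_nonneg (green A z t t)]
  refine (sq_le_one_iff₀ (by positivity)).1 ?_
  calc (z.im * ‖green A z s t‖) ^ 2 = z.im * (z.im * ‖green A z s t‖ ^ 2) := by ring
    _ ≤ z.im * ‖green A z t t‖ := by gcongr; exact hsq s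
    _ ≤ 1 := hdiag

lemma one_le_two_mul_mul_im_inv {r E η : ℝ} (hη : 0 < η) (hr : |r - E| ≤ η) :
    1 ≤ 2 * η * ((r - (E + η * Complex.I) : ℂ)⁻¹).im := by
  have him : ((r - (E + η * Complex.I) : ℂ)⁻¹).im = η / ((r - E) ^ 2 + η ^ 2) := by
    simp [Complex.inv_im, Complex.normSq_apply, sq]
  have hsq : (r - E) ^ 2 ≤ η ^ 2 := sq_le_sq' (abs_le.1 hr).1 (abs_le.1 hr).2
  rw [him, ← mul_div_assoc, one_le_div (by positivity)]
  linarith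

lemma card_eigenvalues_le (hA : A.IsHermitian) (E : ℝ) {η : ℝ} (hη : 0 < η) :
    ((Finset.univ.filter fun k => |hA.eigenvalues k - E| ≤ η).card : ℝ) ≤
      2 * η * ∑ s, ‖green A (E + η * Complex.I) s s‖ := by
  set z : ℂ := E + η * Complex.I with hz
  have him : z.im = η := by simp [hz]
  have hnonneg (k : n) : 0 ≤ ((hA.eigenvalues k - z : ℂ)⁻¹).im := by
    simp only [Complex.inv_im, Complex.sub_im, Complex.ofReal_im, him]
    exact div_nonneg (by linarith) (Complex.normSq_nonneg _)
  calc ((Finset.univ.filter fun k => |hA.eigenvalues k - E| ≤ η).card : ℝ)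
      ≤ ∑ k, 2 * η * ((hA.eigenvalues k - z : ℂ)⁻¹).im := by
        rw [← nsmul_one]
        refine (Finset.card_nsmul_le_sum _ _ _ fun k hk => ?_).trans
          (Finset.sum_le_univ_sum_of_nonneg fun k => mul_nonneg (by positivity) (hnonneg k))
        exact one_le_two_mul_mul_im_inv hη (Finset.mem_filter.1 hk).2
    _ = 2 * η * ((green A z).trace).im := by
        rw [trace_green hA (him ▸ hη.ne'), Complex.im_sum, Finset.mul_sum]
    _ ≤ 2 * η * ∑ s, ‖green A z s s‖ := by
        gcongr
        exact (le_abs_self _).trans ((Complex.abs_im_le_norm _).trans (norm_sum_le _ _))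

lemma card_filter_roots_charpoly_le {H : Matrix n n ℝ} (hH : H.IsHermitian) (E : ℝ) {η : ℝ}
    (hη : 0 < η) :
    ((H.charpoly.roots.filter fun r => E - η ≤ r ∧ r ≤ E + η).card : ℝ) ≤
      2 * η * ∑ s, ‖green (H.map Complex.ofReal) (E + η * Complex.I) s s‖ := by
  have hA : (H.map Complex.ofReal).IsHermitian :=
    hH.map _ fun r => by simp
  have hroots : H.charpoly.roots = Finset.univ.val.map hA.eigenvalues := by
    refine Multiset.map_injective Complex.ofReal_injective ?_
    calc H.charpoly.roots.map Complex.ofReal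
        = (H.map Complex.ofReal).charpoly.roots := by
          rw [show H.map Complex.ofReal = H.map Complex.ofRealHom from rfl, charpoly_map,
            hH.splits_charpoly.roots_map]
          rfl
      _ = (Finset.univ.val.map hA.eigenvalues).map Complex.ofReal := by
          rw [hA.roots_charpoly_eq_eigenvalues, Multiset.map_map]
          rfl
  convert card_eigenvalues_le hA E hη
  rw [hroots, Multiset.filter_map, Multiset.card_map, Finset.card_def, Finset.filter_val]
  simp [abs_le, le_sub_iff_add_le, add_comm]

end Resolvents

section ProductMeasures

variable {ι : Type*} [Fintype ι] [DecidableEq ι] {X : ι → Type*} [∀ i, MeasurableSpace (X i)]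
  {μ : ∀ i, Measure (X i)} [∀ i, SigmaFinite (μ i)]

lemma lintegral_pi_mul_le {i : ι} {w : X i → ℝ≥0∞} (hw : Measurable w) {F : (∀ i, X i) → ℝ≥0∞}
    (hF : Measurable F) {C : ℝ≥0∞}
    (h : ∀ u, ∫⁻ a, w a * F (Function.update u i a) ∂μ i ≤
      C * ∫⁻ a, F (Function.update u i a) ∂μ i) :
    ∫⁻ u, w (u i) * F u ∂Measure.pi μ ≤ C * ∫⁻ u, F u ∂Measure.pi μ := by
  rw [← lintegral_const_mul C hF]
  refine lintegral_le_of_lmarginal_le {i} (by fun_prop) (by fun_prop) fun u => ?_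
  simp only [lmarginal_singleton, Function.update_self]
  exact (h u).trans_eq (lintegral_const_mul C (hF.comp (measurable_update u))).symm

end ProductMeasures

section SiteDeterminant

/-- The characteristic polynomial of the block `[[τ, 1], [1, -τ]]` at the fixed energy `z`, up to
sign, as a polynomial in the potential `τ`. -/
noncomputable def siteDet (z : ℂ) : ℂ[X] := .X ^ 2 + .C (1 - z ^ 2)

lemma monic_siteDet (z : ℂ) : (siteDet z).Monic := by
  rw [siteDet]
  monicity!

lemma natDegree_siteDet_le (z : ℂ) : (siteDet z).natDegree ≤ 2 := by
  rw [siteDet]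
  compute_degree!

lemma one_add_norm_le_mahlerMeasure_siteDet (z : ℂ) :
    1 + ‖z‖ ≤ 3 * (siteDet z).mahlerMeasure := by
  have hlead : 1 ≤ (siteDet z).mahlerMeasure :=
    Polynomial.one_le_mahlerMeasure_of_one_le_norm_leadingCoeff <| by simp [monic_siteDet z]
  have hconst : ‖1 - z ^ 2‖ ≤ (siteDet z).mahlerMeasure := by
    simpa [siteDet, -map_sub, -map_pow] using
      Polynomial.norm_coeff_le_choose_mul_mahlerMeasure 0 (siteDet z)
  have hsq : ‖z‖ ^ 2 ≤ 1 + ‖1 - z ^ 2‖ := by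
    calc ‖z‖ ^ 2 = ‖1 - (1 - z ^ 2)‖ := by simp
      _ ≤ 1 + ‖1 - z ^ 2‖ := (norm_sub_le _ _).trans_eq (by simp)
  nlinarith [sq_nonneg (‖z‖ - 1)]

lemma lintegral_mahlerRatio_siteDet_le {V : Type*} [Fintype V] {μ : Measure ℝ}
    [IsProbabilityMeasure μ] {r : ℝ} {C : ℝ≥0} (hC : IsDecoupling μ 2 r C) (z : ℂ) (x : V) :
    ∫⁻ u, mahlerRatio (siteDet z) (u x) ^ r ∂(Measure.pi fun _ : V => μ) ≤ C := by
  have h := hC (siteDet z) 1 1 (natDegree_siteDet_le z) (by simp) (by simp)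
  simp only [Polynomial.eval_one, div_one, enorm_one, ENNReal.one_rpow, mul_one, lintegral_one,
    measure_univ] at h
  exact ((measurePreserving_eval (fun _ : V => μ) x).lintegral_comp (by fun_prop)).trans_le h

end SiteDeterminant

section BlockHamiltonians

variable {V : Type*} [DecidableEq V]

/-- The on-site part `⨁ₓ [[uₓ, 1], [1, -uₓ]]` of the Hamiltonian, written with Pauli matrices as
`u ⊗ σ₃ + 1 ⊗ σ₁`. -/
noncomputable def siteHam (u : V → ℝ) : Matrix (V × Fin 2) (V × Fin 2) ℂ :=
  diagonal (fun x => (u x : ℂ)) ⊗ₖ !![1, 0; 0, -1] + 1 ⊗ₖ !![0, 1; 1, 0]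

/-- The hopping part `K ⊗ 1` of the Hamiltonian, for a matrix `K` of hopping amplitudes between
positions. -/
def hopHam (K : Matrix V V ℂ) : Matrix (V × Fin 2) (V × Fin 2) ℂ := K ⊗ₖ 1

/-- The block Hamiltonian with potential `u` and hopping matrix `K`. -/
noncomputable def blockHam (K : Matrix V V ℂ) (u : V → ℝ) : Matrix (V × Fin 2) (V × Fin 2) ℂ :=
  siteHam u + hopHam K

lemma siteHam_apply (u : V → ℝ) (s t : V × Fin 2) :
    siteHam u s t = if s.1 = t.1 then !![(u s.1 : ℂ), 1; 1, -u s.1] s.2 t.2 else 0 := by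
  obtain ⟨x, i⟩ := s
  obtain ⟨y, j⟩ := t
  by_cases hxy : x = y
  · subst hxy
    fin_cases i <;> fin_cases j <;> simp [siteHam]
  · simp [siteHam, hxy]

lemma isHermitian_blockHam {K : Matrix V V ℂ} (hK : K.IsHermitian) (u : V → ℝ) :
    (blockHam K u).IsHermitian := by
  have hop : (hopHam K).IsHermitian := by
    rw [hopHam, IsHermitian, conjTranspose_kronecker, hK.eq, conjTranspose_one]
  refine .add (.ext fun s t => ?_) hop
  obtain ⟨x, i⟩ := s
  obtain ⟨y, j⟩ := t
  by_cases hxy : x = y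
  · subst hxy
    fin_cases i <;> fin_cases j <;> simp [siteHam_apply]
  · simp [siteHam_apply, hxy, Ne.symm hxy]

lemma enorm_siteHam_add_apply_le {u : V → ℝ} {x : V} (hu : |u x| ≤ 1) (z : ℂ) (i j : Fin 2) :
    ‖(siteHam u + z • 1) (x, i) (x, j)‖ₑ ≤ 3 * ‖((siteDet z).mahlerMeasure : ℂ)‖ₑ := by
  have hsite : ‖siteHam u (x, i) (x, j)‖ ≤ 1 := by
    fin_cases i <;> fin_cases j <;> simp [siteHam_apply, hu]
  have hone : ‖(z • 1 : Matrix (V × Fin 2) (V × Fin 2) ℂ) (x, i) (x, j)‖ ≤ ‖z‖ := by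
    rw [Matrix.smul_apply, one_apply]
    split_ifs <;> simp
  calc ‖(siteHam u + z • 1) (x, i) (x, j)‖ₑ ≤ ‖(3 * (siteDet z).mahlerMeasure : ℂ)‖ₑ := by
        rw [enorm_le_iff_norm_le]
        refine (norm_add_le _ _).trans ((add_le_add hsite hone).trans ?_)
        simpa [abs_of_nonneg (Polynomial.mahlerMeasure_nonneg _)] using
          one_add_norm_le_mahlerMeasure_siteDet z
    _ = 3 * ‖((siteDet z).mahlerMeasure : ℂ)‖ₑ := by simp [← ofReal_norm]

lemma continuous_blockHam (K : Matrix V V ℂ) : Continuous (blockHam K) := by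
  refine continuous_matrix fun s t => ?_
  simp only [blockHam, siteHam, Matrix.add_apply, kroneckerMap_apply, diagonal_apply]
  split_ifs <;> fun_prop

lemma blockHam_update (K : Matrix V V ℂ) (u : V → ℝ) (x : V) (τ : ℝ) :
    blockHam K (Function.update u x τ) =
      blockHam K (Function.update u x 0) +
        (τ : ℂ) • (diagonal (Pi.single x 1) ⊗ₖ !![1, 0; 0, -1]) := by
  ext ⟨y, i⟩ ⟨y', j⟩
  rcases eq_or_ne y x with rfl | hyx
  · by_cases hy : y = y'
    · simp [blockHam, siteHam, hy]
      ring
    · simp [blockHam, siteHam, hy]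
  · rcases eq_or_ne y y' with rfl | hy
    · simp [blockHam, siteHam, hyx]
    · simp [blockHam, siteHam, hy]

variable [Fintype V]

lemma siteHam_mul_self (u : V → ℝ) :
    siteHam u * siteHam u = diagonal fun s => (1 + u s.1 ^ 2 : ℂ) := by
  ext ⟨x, i⟩ ⟨y, j⟩
  simp only [mul_apply, Fintype.sum_prod_type, siteHam_apply]
  by_cases hxy : x = y
  · subst hxy
    fin_cases i <;> fin_cases j <;> simp [sq, add_comm]
  · fin_cases i <;> fin_cases j <;> simp [hxy]

lemma siteHam_add_mul_siteHam_sub (u : V → ℝ) (z : ℂ) :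
    (siteHam u + z • 1) * (siteHam u - z • 1) =
      diagonal fun s => (siteDet z).eval (u s.1 : ℂ) := by
  have hcomm : Commute (siteHam u) (z • 1) := (Commute.one_right _).smul_right z
  rw [← hcomm.mul_self_sub_mul_self_eq, siteHam_mul_self, smul_mul_smul_comm, one_mul,
    smul_one_eq_diagonal, diagonal_sub]
  congr 1
  ext s
  simp [siteDet]
  ring

variable {K : Matrix V V ℂ} {z : ℂ}

lemma diagonal_siteDet_mul_green (hK : K.IsHermitian) (u : V → ℝ) (hz : z.im ≠ 0) :
    (diagonal fun s => (siteDet z).eval (u s.1 : ℂ)) * green (blockHam K u) z =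
      (siteHam u + z • 1) * (1 - hopHam K * green (blockHam K u) z) := by
  have hres := sub_smul_one_mul_green (isHermitian_blockHam hK u) hz
  have hsub : siteHam u - z • 1 = blockHam K u - z • 1 - hopHam K := by
    rw [blockHam]
    abel
  rw [← siteHam_add_mul_siteHam_sub, mul_assoc, hsub, sub_mul, hres]

lemma sum_enorm_one_sub_hopHam_mul_apply_le (K : Matrix V V ℂ)
    (G : Matrix (V × Fin 2) (V × Fin 2) ℂ) (x : V) (t : V × Fin 2) :
    ∑ j, ‖(1 - hopHam K * G) (x, j) t‖ₑ ≤ 1 + ∑ y, ∑ j, ‖K x y‖ₑ * ‖G (y, j) t‖ₑ := by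
  have hone : ∑ j : Fin 2, ‖(1 : Matrix (V × Fin 2) (V × Fin 2) ℂ) (x, j) t‖ₑ ≤ 1 := by
    obtain ⟨y, k⟩ := t
    by_cases hxy : x = y <;> fin_cases k <;> simp [one_apply, hxy]
  have hK_apply (j : Fin 2) : (hopHam K * G) (x, j) t = ∑ y, K x y * G (y, j) t := by
    simp [hopHam, mul_apply, Fintype.sum_prod_type, one_apply]
  calc ∑ j, ‖(1 - hopHam K * G) (x, j) t‖ₑ
      ≤ ∑ j, (‖(1 : Matrix (V × Fin 2) (V × Fin 2) ℂ) (x, j) t‖ₑ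
          + ∑ y, ‖K x y‖ₑ * ‖G (y, j) t‖ₑ) := by
        gcongr with j
        rw [Matrix.sub_apply, hK_apply]
        refine enorm_sub_le.trans ?_
        gcongr
        exact (enorm_sum_le _ _).trans_eq (by simp only [enorm_mul])
    _ ≤ 1 + ∑ y, ∑ j, ‖K x y‖ₑ * ‖G (y, j) t‖ₑ := by
        rw [Finset.sum_add_distrib, Finset.sum_comm (γ := V)]
        gcongr

lemma enorm_green_blockHam_le (hK : K.IsHermitian) {u : V → ℝ} (hz : z.im ≠ 0) {x : V}
    (hu : |u x| ≤ 1) (hdet : (siteDet z).eval (u x : ℂ) ≠ 0) (i : Fin 2) (t : V × Fin 2) :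
    ‖green (blockHam K u) z (x, i) t‖ₑ ≤ 3 * mahlerRatio (siteDet z) (u x) *
      (1 + ∑ y, ∑ j, ‖K x y‖ₑ * ‖green (blockHam K u) z (y, j) t‖ₑ) := by
  set G := green (blockHam K u) z
  set e := siteDet z
  have hentry : e.eval (u x : ℂ) * G (x, i) t =
      ∑ j, (siteHam u + z • 1) (x, i) (x, j) * (1 - hopHam K * G) (x, j) t := by
    have h := congrFun₂ (diagonal_siteDet_mul_green hK u hz) (x, i) t
    rw [diagonal_mul, mul_apply, Fintype.sum_prod_type, Finset.sum_eq_single x] at h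
    · exact h
    · intro y _ hyx
      simp [siteHam_apply, one_apply, hyx.symm]
    · simp
  calc ‖G (x, i) t‖ₑ = ‖(e.eval (u x : ℂ))⁻¹‖ₑ * ‖e.eval (u x : ℂ) * G (x, i) t‖ₑ := by
        rw [← enorm_mul, inv_mul_cancel_left₀ hdet]
    _ ≤ ‖(e.eval (u x : ℂ))⁻¹‖ₑ *
          ∑ j, 3 * ‖(e.mahlerMeasure : ℂ)‖ₑ * ‖(1 - hopHam K * G) (x, j) t‖ₑ := by
        rw [hentry]
        gcongr
        refine (enorm_sum_le _ _).trans (Finset.sum_le_sum fun j _ => ?_)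
        rw [enorm_mul]
        gcongr
        exact enorm_siteHam_add_apply_le hu z i j
    _ = 3 * mahlerRatio e (u x) * ∑ j, ‖(1 - hopHam K * G) (x, j) t‖ₑ := by
        rw [← Finset.mul_sum, mahlerRatio, div_eq_mul_inv, enorm_mul]
        ring
    _ ≤ _ := by
        gcongr
        exact sum_enorm_one_sub_hopHam_mul_apply_le K G x t

/-- The fractional moment `𝔼 |G(s, t; z)| ^ r` of the Green function of the block Hamiltonian with
hopping matrix `K` and independent potentials of law `μ`. -/
noncomputable def greenMoment (μ : Measure ℝ) (r : ℝ) (K : Matrix V V ℂ) (z : ℂ)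
    (s t : V × Fin 2) : ℝ≥0∞ :=
  ∫⁻ u, ‖green (blockHam K u) z s t‖ₑ ^ r ∂Measure.pi fun _ : V => μ

@[fun_prop]
lemma measurable_green_blockHam (K : Matrix V V ℂ) (z : ℂ) (s t : V × Fin 2) :
    Measurable fun u => green (blockHam K u) z s t := by
  have hsub : Continuous fun u => blockHam K u - z • 1 :=
    (continuous_blockHam K).sub continuous_const
  simp only [green, inv_def, Matrix.smul_apply, smul_eq_mul, Ring.inverse_eq_inv']
  exact hsub.matrix_det.measurable.inv.mul (hsub.matrix_adjugate.matrix_elem s t).measurable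

lemma exists_green_blockHam_update_eq_div (K : Matrix V V ℂ) (z : ℂ) (u : V → ℝ) (x : V)
    (s t : V × Fin 2) :
    ∃ p q : ℂ[X], p.natDegree ≤ 2 ∧ q.natDegree ≤ 2 ∧ ∀ τ : ℝ,
      green (blockHam K (Function.update u x τ)) z s t = p.eval (τ : ℂ) / q.eval (τ : ℂ) := by
  set D : Matrix (V × Fin 2) (V × Fin 2) ℂ := diagonal (Pi.single x 1) ⊗ₖ !![1, 0; 0, -1]
  have hD : ∀ r ∉ ({x} ×ˢ Finset.univ : Finset (V × Fin 2)), ∀ r', D r r' = 0 := by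
    rintro ⟨y, i⟩ hy ⟨y', j⟩
    have hyx : y ≠ x := by simpa [eq_comm] using hy
    simp [D, diagonal_apply, hyx]
  obtain ⟨p, q, hp, hq, hpq⟩ :=
    exists_inv_add_smul_apply_eq_div (blockHam K (Function.update u x 0) - z • 1) D hD s t
  refine ⟨p, q, by simpa using hp, by simpa using hq, fun τ => ?_⟩
  rw [green, blockHam_update, add_sub_right_comm, hpq]

variable {r : ℝ}

lemma enorm_green_blockHam_rpow_le (hK : K.IsHermitian) {u : V → ℝ} (hz : z.im ≠ 0) {x : V}
    (hu : |u x| ≤ 1) (hdet : (siteDet z).eval (u x : ℂ) ≠ 0) (hr₀ : 0 < r) (hr₁ : r ≤ 1)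
    (i : Fin 2) (t : V × Fin 2) :
    ‖green (blockHam K u) z (x, i) t‖ₑ ^ r ≤ 3 * (mahlerRatio (siteDet z) (u x) ^ r +
      ∑ y, ∑ j, ‖K x y‖ₑ ^ r *
        (mahlerRatio (siteDet z) (u x) ^ r * ‖green (blockHam K u) z (y, j) t‖ₑ ^ r)) := by
  set G := green (blockHam K u) z
  set w := mahlerRatio (siteDet z) (u x)
  have hthree : (3 : ℝ≥0∞) ^ r ≤ 3 := by
    simpa using ENNReal.rpow_le_rpow_of_exponent_le (by norm_num : (1 : ℝ≥0∞) ≤ 3) hr₁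
  have hsum : (1 + ∑ y, ∑ j, ‖K x y‖ₑ * ‖G (y, j) t‖ₑ) ^ r ≤
      1 + ∑ y, ∑ j, ‖K x y‖ₑ ^ r * ‖G (y, j) t‖ₑ ^ r := by
    simp only [← Fintype.sum_prod_type', ← ENNReal.mul_rpow_of_nonneg _ _ hr₀.le]
    refine (ENNReal.rpow_add_le_add_rpow _ _ hr₀.le hr₁).trans ?_
    rw [ENNReal.one_rpow]
    gcongr
    exact sum_rpow_le_sum_rpow _ _ hr₀ hr₁
  calc ‖G (x, i) t‖ₑ ^ r
      ≤ (3 * w * (1 + ∑ y, ∑ j, ‖K x y‖ₑ * ‖G (y, j) t‖ₑ)) ^ r :=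
        ENNReal.rpow_le_rpow (enorm_green_blockHam_le hK hz hu hdet i t) hr₀.le
    _ ≤ 3 * w ^ r * (1 + ∑ y, ∑ j, ‖K x y‖ₑ ^ r * ‖G (y, j) t‖ₑ ^ r) := by
        rw [ENNReal.mul_rpow_of_nonneg _ _ hr₀.le, ENNReal.mul_rpow_of_nonneg _ _ hr₀.le]
        gcongr
    _ = _ := by
        simp only [mul_add, mul_one, Finset.mul_sum, mul_assoc, mul_left_comm]

section FractionalMoments

variable {μ : Measure ℝ} [IsProbabilityMeasure μ]

lemma lintegral_mahlerRatio_siteDet_mul_le {C : ℝ≥0} (hC : IsDecoupling μ 2 r C) (z : ℂ)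
    (x : V) (s t : V × Fin 2) :
    ∫⁻ u, mahlerRatio (siteDet z) (u x) ^ r * ‖green (blockHam K u) z s t‖ₑ ^ r
        ∂(Measure.pi fun _ : V => μ) ≤ C * greenMoment μ r K z s t := by
  refine lintegral_pi_mul_le (w := fun τ => mahlerRatio (siteDet z) τ ^ r)
    (F := fun u => ‖green (blockHam K u) z s t‖ₑ ^ r) (by fun_prop) (by fun_prop) fun u => ?_
  obtain ⟨p, q, hp, hq, hpq⟩ := exists_green_blockHam_update_eq_div K z u x s t
  simp only [hpq]
  exact hC _ p q (natDegree_siteDet_le z) hp hq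

lemma greenMoment_lt_top (hK : K.IsHermitian) (hz : 0 < z.im) (hr₀ : 0 ≤ r) (s t : V × Fin 2) :
    greenMoment μ r K z s t < ∞ := by
  have hbound (u : V → ℝ) : ‖green (blockHam K u) z s t‖ₑ ≤ ENNReal.ofReal z.im⁻¹ := by
    rw [← ofReal_norm]
    refine ENNReal.ofReal_le_ofReal ((le_inv_mul_iff₀ hz).2 ?_ |>.trans_eq (mul_one _))
    exact mul_norm_green_le_one (isHermitian_blockHam hK u) hz s t
  calc greenMoment μ r K z s t
      ≤ ∫⁻ _, ENNReal.ofReal z.im⁻¹ ^ r ∂Measure.pi fun _ : V => μ :=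
        lintegral_mono fun u => ENNReal.rpow_le_rpow (hbound u) hr₀
    _ < ∞ := by
        simpa using ENNReal.rpow_lt_top_of_nonneg hr₀ ENNReal.ofReal_ne_top

lemma greenMoment_le {σ : ℝ} {C : ℝ≥0} (hμ : IsFractionallyRegular μ σ) (hσ : 0 < σ)
    (hC : IsDecoupling μ 2 r C) (hr₀ : 0 < r) (hr₁ : r ≤ 1) (hK : K.IsHermitian) (hz : z.im ≠ 0)
    (x : V) (i : Fin 2) (t : V × Fin 2) :
    greenMoment μ r K z (x, i) t ≤
      3 * C * (1 + ∑ y, ‖K x y‖ₑ ^ r * ∑ j, greenMoment μ r K z (y, j) t) := by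
  set P := Measure.pi fun _ : V => μ
  have hregular : ∀ᵐ τ : ℝ ∂μ, |τ| ≤ 1 ∧ (siteDet z).eval (τ : ℂ) ≠ 0 := by
    filter_upwards [hμ.ae_mem_Icc, hμ.ae_eval_ne_zero hσ (monic_siteDet z).ne_zero]
      with τ hτ hdet using ⟨abs_le.2 hτ, hdet⟩
  calc greenMoment μ r K z (x, i) t
      ≤ ∫⁻ u, 3 * (mahlerRatio (siteDet z) (u x) ^ r + ∑ y, ∑ j, ‖K x y‖ₑ ^ r *
          (mahlerRatio (siteDet z) (u x) ^ r *
            ‖green (blockHam K u) z (y, j) t‖ₑ ^ r)) ∂P := by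
        refine lintegral_mono_ae ?_
        filter_upwards [(Measure.tendsto_eval_ae_ae (μ := fun _ : V => μ) (i := x)).eventually
          hregular] with u ⟨hu, hdet⟩
        exact enorm_green_blockHam_rpow_le hK hz hu hdet hr₀ hr₁ i t
    _ = 3 * (∫⁻ u, mahlerRatio (siteDet z) (u x) ^ r ∂P + ∑ y, ∑ j, ‖K x y‖ₑ ^ r *
          ∫⁻ u, mahlerRatio (siteDet z) (u x) ^ r *
            ‖green (blockHam K u) z (y, j) t‖ₑ ^ r ∂P) := by
        rw [lintegral_const_mul _ (by fun_prop), lintegral_add_left (by fun_prop),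
          lintegral_finsetSum _ (by fun_prop)]
        congr! 3 with y
        rw [lintegral_finsetSum _ (by fun_prop)]
        congr! 1 with j
        rw [lintegral_const_mul _ (by fun_prop)]
    _ ≤ 3 * (C + ∑ y, ∑ j, ‖K x y‖ₑ ^ r * (C * greenMoment μ r K z (y, j) t)) := by
        gcongr with y _ j
        · exact lintegral_mahlerRatio_siteDet_le hC z x
        · exact lintegral_mahlerRatio_siteDet_mul_le hC z x (y, j) t
    _ = _ := by
        simp only [mul_add, mul_one, Finset.mul_sum, mul_assoc, mul_left_comm (C : ℝ≥0∞)]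

lemma greenMoment_le_of_small {σ : ℝ} {C : ℝ≥0} {κ : ℝ≥0∞} (hμ : IsFractionallyRegular μ σ)
    (hσ : 0 < σ) (hC : IsDecoupling μ 2 r C) (hr₀ : 0 < r) (hr₁ : r ≤ 1) (hK : K.IsHermitian)
    (hκ : ∀ x, ∑ y, ‖K x y‖ₑ ^ r ≤ κ) (hsmall : 12 * C * κ ≤ 1) (hz : 0 < z.im)
    (s t : V × Fin 2) : greenMoment μ r K z s t ≤ 6 * C := by
  have : Nonempty (V × Fin 2) := ⟨s⟩
  obtain ⟨⟨x, i⟩, hmax⟩ := Finite.exists_max fun s => greenMoment μ r K z s t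
  refine (hmax s).trans ?_
  set S := greenMoment μ r K z (x, i) t
  have hS_top : S / 2 ≠ ∞ :=
    (ENNReal.div_lt_top (greenMoment_lt_top hK hz hr₀.le _ t).ne two_ne_zero).ne
  have hhalf : S / 2 + S / 2 ≤ 3 * C + S / 2 := by
    calc S / 2 + S / 2 = S := ENNReal.add_halves S
      _ ≤ 3 * C * (1 + ∑ y, ‖K x y‖ₑ ^ r * ∑ j, greenMoment μ r K z (y, j) t) :=
        greenMoment_le hμ hσ hC hr₀ hr₁ hK hz.ne' x i t
      _ ≤ 3 * C * (1 + κ * (2 * S)) := by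
        gcongr
        calc ∑ y, ‖K x y‖ₑ ^ r * ∑ j, greenMoment μ r K z (y, j) t
            ≤ ∑ y, ‖K x y‖ₑ ^ r * (2 * S) := by
              gcongr with y
              simpa using Finset.univ.sum_le_card_nsmul _ S fun j _ => hmax (y, j)
          _ ≤ κ * (2 * S) := by
              rw [← Finset.sum_mul]
              gcongr
              exact hκ x
      _ = 3 * C + 12 * C * κ * (S / 2) := by
        conv_lhs => rw [← ENNReal.add_halves S]
        ring
      _ ≤ 3 * C + S / 2 := by
        gcongr
        exact mul_le_of_le_one_left zero_le hsmall
  calc S = S / 2 + S / 2 := (ENNReal.add_halves S).symm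
    _ ≤ 3 * C + 3 * C := by
      have := ENNReal.le_of_add_le_add_right hS_top hhalf
      gcongr
    _ = 6 * C := by ring

end FractionalMoments

end BlockHamiltonians

lemma enorm_card_filter_roots_charpoly_le {n : Type*} [Fintype n] [DecidableEq n]
    {H : Matrix n n ℝ} (hH : H.IsHermitian) (E : ℝ) {η r : ℝ} (hη : 0 < η) (hr₀ : 0 ≤ r)
    (hr₁ : r ≤ 1) :
    ‖((H.charpoly.roots.filter fun a => E - η ≤ a ∧ a ≤ E + η).card : ℝ)‖ₑ ≤
      ∑ s, 2 * ENNReal.ofReal η ^ r *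
        ‖green (H.map Complex.ofReal) (E + η * Complex.I) s s‖ₑ ^ r := by
  set G := green (H.map Complex.ofReal) (E + η * Complex.I)
  have hG (s : n) : ENNReal.ofReal η * ‖G s s‖ₑ ≤ 1 := by
    rw [← ofReal_norm, ← ENNReal.ofReal_mul hη.le, ENNReal.ofReal_le_one]
    simpa using mul_norm_green_le_one (z := E + η * Complex.I)
      (hH.map Complex.ofReal fun a => by simp) (by simpa using hη) s s
  calc ‖((H.charpoly.roots.filter fun a => E - η ≤ a ∧ a ≤ E + η).card : ℝ)‖ₑ
      ≤ ENNReal.ofReal (2 * η * ∑ s, ‖G s s‖) := by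
        rw [Real.enorm_of_nonneg (Nat.cast_nonneg _)]
        exact ENNReal.ofReal_le_ofReal (card_filter_roots_charpoly_le hH E hη)
    _ = ∑ s, 2 * (ENNReal.ofReal η * ‖G s s‖ₑ) := by
        simp only [← ofReal_norm]
        rw [ENNReal.ofReal_mul (by positivity), ENNReal.ofReal_mul zero_le_two,
          ENNReal.ofReal_sum_of_nonneg fun s _ => norm_nonneg _, Finset.mul_sum,
          ENNReal.ofReal_ofNat]
        simp only [mul_assoc]
    _ ≤ ∑ s, 2 * (ENNReal.ofReal η * ‖G s s‖ₑ) ^ r := by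
        gcongr with s
        simpa using ENNReal.rpow_le_rpow_of_exponent_ge (hG s) hr₁
    _ = _ := by simp only [ENNReal.mul_rpow_of_nonneg _ _ hr₀, mul_assoc]

section NearestNeighbours

variable {d : ℕ}

lemma dist1_comm (x y : Fin d → ℤ) : dist1 x y = dist1 y x :=
  Finset.sum_congr rfl fun i _ => by rw [← Int.natAbs_neg, neg_sub]

lemma card_filter_dist1_eq_one_le (Λ : Finset (Fin d → ℤ)) (x : Fin d → ℤ) :
    (Finset.univ.filter fun y : Λ => dist1 x y = 1).card ≤ 3 ^ d := by
  have hsub : (Finset.univ.filter fun y : Λ => dist1 x y = 1).map (.subtype _) ⊆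
      Finset.Icc (x - 1) (x + 1) := by
    intro y hmem
    obtain ⟨y, hy, rfl⟩ := Finset.mem_map.1 hmem
    have hdist : dist1 x y = 1 := (Finset.mem_filter.1 hy).2
    have hcoord (i : Fin d) : (x i - (y : Fin d → ℤ) i).natAbs ≤ 1 :=
      (Finset.single_le_sum (f := fun i => (x i - (y : Fin d → ℤ) i).natAbs)
        (fun _ _ => Nat.zero_le _) (Finset.mem_univ i)).trans_eq hdist
    simp only [Finset.mem_Icc, Pi.le_def, ← forall_and]
    intro i
    have := hcoord i
    simp only [Pi.sub_apply, Pi.add_apply, Pi.one_apply, Function.Embedding.subtype_apply]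
    omega
  calc (Finset.univ.filter fun y : Λ => dist1 x y = 1).card
      ≤ (Finset.Icc (x - 1) (x + 1)).card := by
        rw [← Finset.card_map]
        exact Finset.card_le_card hsub
    _ = 3 ^ d := by
        have hcard (a : ℤ) : a + 1 + 1 - (a - 1) = 3 := by ring
        simp [Pi.card_Icc, hcard]

/-- The nearest-neighbour hopping matrix of amplitude `γ` on `Λ`, complexified since the Green
function is taken at complex energies. -/
def hopping (γ : ℝ) (Λ : Finset (Fin d → ℤ)) : Matrix Λ Λ ℂ :=
  of fun x y => if dist1 (x : Fin d → ℤ) y = 1 then (γ : ℂ) else 0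

lemma isHermitian_hopping (γ : ℝ) (Λ : Finset (Fin d → ℤ)) : (hopping γ Λ).IsHermitian := by
  refine .ext fun x y => ?_
  by_cases h : dist1 (x : Fin d → ℤ) y = 1 <;> simp [hopping, dist1_comm (y : Fin d → ℤ), h]

lemma isHermitian_Ham (γ : ℝ) (Λ : Finset (Fin d → ℤ)) (u : Λ → ℝ) :
    (Ham d γ Λ u).IsHermitian := by
  refine .ext fun s t => ?_
  simp only [Ham, star_trivial, dist1_comm (t.1 : Fin d → ℤ), eq_comm (a := t.1),
    eq_comm (a := t.2)]
  split_ifs <;> simp_all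

lemma map_ofReal_Ham (γ : ℝ) (Λ : Finset (Fin d → ℤ)) (u : Λ → ℝ) :
    (Ham d γ Λ u).map Complex.ofReal = blockHam (hopping γ Λ) u := by
  ext ⟨x, i⟩ ⟨y, j⟩
  rcases eq_or_ne x y with rfl | hxy
  · fin_cases i <;> fin_cases j <;> simp [Ham, blockHam, siteHam_apply, hopHam, hopping, dist1]
  · by_cases hij : i = j <;> by_cases h : dist1 (x : Fin d → ℤ) y = 1 <;>
      simp [Ham, blockHam, siteHam_apply, hopHam, hopping, hxy, hij, h]

lemma sum_enorm_hopping_rpow_le {γ r : ℝ} (hr : 0 < r) (Λ : Finset (Fin d → ℤ)) (x : Λ) :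
    ∑ y, ‖hopping γ Λ x y‖ₑ ^ r ≤ 3 ^ d * ‖γ‖ₑ ^ r := by
  calc ∑ y, ‖hopping γ Λ x y‖ₑ ^ r
      = ∑ y with dist1 (x : Fin d → ℤ) (y : Λ) = 1, ‖γ‖ₑ ^ r := by
        rw [Finset.sum_filter]
        refine Finset.sum_congr rfl fun y _ => ?_
        by_cases h : dist1 (x : Fin d → ℤ) y = 1 <;> simp [hopping, h, hr, ← ofReal_norm]
    _ ≤ 3 ^ d * ‖γ‖ₑ ^ r := by
        rw [Finset.sum_const, nsmul_eq_mul]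
        gcongr
        exact_mod_cast card_filter_dist1_eq_one_le Λ x

end NearestNeighbours

lemma integral_eigCount_le {d : ℕ} {μ : Measure ℝ} [IsProbabilityMeasure μ] {σ r : ℝ} {C : ℝ≥0}
    (hμ : IsFractionallyRegular μ σ) (hσ : 0 < σ) (hC : IsDecoupling μ 2 r C) (hr₀ : 0 < r)
    (hr₁ : r ≤ 1) {γ : ℝ} (hγ : 0 ≤ γ) (hsmall : 12 * C * (3 ^ d * γ ^ r) ≤ 1)
    (Λ : Finset (Fin d → ℤ)) (E : ℝ) {δ : ℝ} (hδ : 0 < δ) :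
    ∫ u, (eigCount d γ Λ u E δ : ℝ) ∂(Measure.pi fun _ : Λ => μ) ≤
      24 * C * Λ.card * (δ / 2) ^ r := by
  set z : ℂ := E + (δ / 2 : ℝ) * Complex.I with hz
  have hsmall' : 12 * (C : ℝ≥0∞) * (3 ^ d * ‖γ‖ₑ ^ r) ≤ 1 := by
    rw [Real.enorm_of_nonneg hγ, ENNReal.ofReal_rpow_of_nonneg hγ hr₀.le]
    simpa [ENNReal.ofReal_mul] using ENNReal.ofReal_le_one.2 hsmall
  have hcount (u : Λ → ℝ) : ‖(eigCount d γ Λ u E δ : ℝ)‖ₑ ≤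
      ∑ s, 2 * ENNReal.ofReal (δ / 2) ^ r * ‖green (blockHam (hopping γ Λ) u) z s s‖ₑ ^ r := by
    rw [← map_ofReal_Ham]
    exact enorm_card_filter_roots_charpoly_le (isHermitian_Ham γ Λ u) E (half_pos hδ) hr₀.le hr₁
  have henorm : ‖∫ u, (eigCount d γ Λ u E δ : ℝ) ∂(Measure.pi fun _ : Λ => μ)‖ₑ ≤
      ENNReal.ofReal (24 * C * Λ.card * (δ / 2) ^ r) := by
    calc ‖∫ u, (eigCount d γ Λ u E δ : ℝ) ∂(Measure.pi fun _ : Λ => μ)‖ₑ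
        ≤ ∫⁻ u, ‖(eigCount d γ Λ u E δ : ℝ)‖ₑ ∂(Measure.pi fun _ : Λ => μ) :=
          enorm_integral_le_lintegral_enorm _
      _ ≤ _ := lintegral_mono hcount
      _ = ∑ s, 2 * ENNReal.ofReal (δ / 2) ^ r * greenMoment μ r (hopping γ Λ) z s s := by
          rw [lintegral_finsetSum _ (by fun_prop)]
          congr! 1 with s
          rw [lintegral_const_mul _ (by fun_prop), greenMoment]
      _ ≤ ∑ _s : Λ × Fin 2, 2 * ENNReal.ofReal (δ / 2) ^ r * (6 * C) := by
          gcongr with s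
          exact greenMoment_le_of_small hμ hσ hC hr₀ hr₁ (isHermitian_hopping γ Λ)
            (sum_enorm_hopping_rpow_le hr₀ Λ) hsmall' (by simpa [hz] using hδ) s s
      _ = ENNReal.ofReal (24 * C * Λ.card * (δ / 2) ^ r) := by
          rw [ENNReal.ofReal_rpow_of_pos (half_pos hδ), ENNReal.ofReal_mul (by positivity),
            ENNReal.ofReal_mul (by positivity), ENNReal.ofReal_mul (by norm_num)]
          simp
          ring
  rw [← ofReal_norm, ENNReal.ofReal_le_ofReal_iff (by positivity)] at henorm
  exact (le_abs_self _).trans henorm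

lemma rpow_le_exp_neg_of_le_rpow {γ δ : ℝ} (hγ : 0 < γ) (hγ₁ : γ ≤ 1) (hδ : 0 < δ)
    (hδγ : δ ≤ γ ^ ((1 : ℝ) / 4)) {b : ℝ} (hb : 0 ≤ b) :
    δ ^ (4 * b) ≤
      Real.exp (-(b * |Real.log γ| ^ ((2 : ℝ) / 3) * |Real.log δ| ^ ((1 : ℝ) / 3))) := by
  have hlogγ : Real.log γ ≤ 0 := Real.log_nonpos hγ.le hγ₁
  have hlog : Real.log δ ≤ 1 / 4 * Real.log γ := by
    simpa [Real.log_rpow hγ] using Real.log_le_log hδ hδγ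
  have habs : |Real.log γ| ≤ 4 * |Real.log δ| := by
    rw [abs_of_nonpos hlogγ, abs_of_nonpos (hlog.trans (by linarith))]
    linarith
  have hmean : |Real.log γ| ^ ((2 : ℝ) / 3) * |Real.log δ| ^ ((1 : ℝ) / 3) ≤ 4 * |Real.log δ| := by
    calc |Real.log γ| ^ ((2 : ℝ) / 3) * |Real.log δ| ^ ((1 : ℝ) / 3)
        ≤ (4 * |Real.log δ|) ^ ((2 : ℝ) / 3) * (4 * |Real.log δ|) ^ ((1 : ℝ) / 3) := by
          gcongr
          linarith [abs_nonneg (Real.log δ)]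
      _ = 4 * |Real.log δ| := by
          rw [← Real.rpow_add_of_nonneg (by positivity) (by norm_num) (by norm_num)]
          norm_num
  rw [Real.rpow_def_of_pos hδ, mul_assoc b]
  refine Real.exp_le_exp.2 ?_
  calc Real.log δ * (4 * b) = -(b * (4 * |Real.log δ|)) := by
        rw [abs_of_nonpos (hlog.trans (by linarith))]
        ring
    _ ≤ _ := by gcongr

lemma mul_rpow_le_exp_neg {γ δ : ℝ} (hγ : 0 < γ) (hγ₁ : γ ≤ 1) (hδ : 0 < δ)
    (hδγ : δ ≤ γ ^ ((1 : ℝ) / 4)) {b A : ℝ} (hb : 0 ≤ b) (hA : 0 ≤ A) (hsmall : A * γ ^ b ≤ 1) :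
    A * δ ^ (8 * b) ≤
      Real.exp (-(b * |Real.log γ| ^ ((2 : ℝ) / 3) * |Real.log δ| ^ ((1 : ℝ) / 3))) := by
  have hδb : δ ^ (4 * b) ≤ γ ^ b := by
    calc δ ^ (4 * b) ≤ (γ ^ ((1 : ℝ) / 4)) ^ (4 * b) := by gcongr
      _ = γ ^ b := by
        rw [← Real.rpow_mul hγ.le]
        ring_nf
  calc A * δ ^ (8 * b) = A * δ ^ (4 * b) * δ ^ (4 * b) := by
        rw [mul_assoc, ← Real.rpow_add hδ]
        ring_nf
    _ ≤ 1 * δ ^ (4 * b) := by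
        gcongr
        exact hsmall.trans' (by gcongr)
    _ ≤ _ := (one_mul _).trans_le (rpow_le_exp_neg_of_le_rpow hγ hγ₁ hδ hδγ hb)

lemma exists_pos_rpow_mul_le_one {r : ℝ} (hr : 0 < r) (k : ℝ) :
    ∃ γ₀, 0 < γ₀ ∧ γ₀ ≤ 1 ∧ k * γ₀ ^ r ≤ 1 := by
  set m := max k 1
  have hm₀ : 0 < m := by positivity
  have hm₁ : m⁻¹ ≤ 1 := inv_le_one_of_one_le₀ (le_max_right _ _)
  refine ⟨m⁻¹ ^ r⁻¹, by positivity, Real.rpow_le_one (by positivity) hm₁ (by positivity), ?_⟩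
  rw [Real.rpow_inv_rpow (by positivity) hr.ne', ← div_eq_mul_inv, div_le_one hm₀]
  exact le_max_left _ _

theorem density_of_states_general (d : ℕ) {μ : Measure ℝ} [IsProbabilityMeasure μ] {σ : ℝ}
    (hσ : 0 < σ) (hμ : IsFractionallyRegular μ σ) :
    ∃ b γ₀ : ℝ, 0 < b ∧ 0 < γ₀ ∧
      ∀ γ : ℝ, 0 < γ → γ ≤ γ₀ →
      ∀ δ : ℝ, 0 < δ → δ ≤ γ ^ ((1 : ℝ) / 4) →
      ∀ (Λ : Finset (Fin d → ℤ)) (E : ℝ),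
      ∫ u, (eigCount d γ Λ u E δ : ℝ) ∂(Measure.pi fun _ : Λ => μ) ≤
        4 * (Λ.card : ℝ) *
          Real.exp (-(b * |Real.log γ| ^ ((2 : ℝ) / 3) * |Real.log δ| ^ ((1 : ℝ) / 3))) := by
  obtain ⟨b, hb, hbσ, hb₁⟩ : ∃ b : ℝ, 0 < b ∧ 32 * b ≤ σ ∧ 8 * b ≤ 1 :=
    ⟨min (σ / 32) (1 / 8), by positivity, by linarith [min_le_left (σ / 32) (1 / 8)],
      by linarith [min_le_right (σ / 32) (1 / 8)]⟩
  obtain ⟨C, hC⟩ := hμ.exists_isDecoupling hσ 2 (by positivity : 0 < 8 * b)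
    (by push_cast; linarith)
  obtain ⟨γ₀, hγ₀, hγ₀₁, hγ₀b⟩ := exists_pos_rpow_mul_le_one hb (12 * C * 3 ^ d)
  refine ⟨b, γ₀, hb, hγ₀, fun γ hγ hγγ₀ δ hδ hδγ Λ E => ?_⟩
  have hγ₁ : γ ≤ 1 := hγγ₀.trans hγ₀₁
  have hsmall : 12 * C * 3 ^ d * γ ^ b ≤ 1 := hγ₀b.trans' (by gcongr)
  have hhop : 12 * C * (3 ^ d * γ ^ (8 * b)) ≤ 1 := by
    rw [← mul_assoc]
    refine hsmall.trans' (mul_le_mul_of_nonneg_left ?_ (by positivity))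
    exact Real.rpow_le_rpow_of_exponent_ge hγ hγ₁ (by linarith)
  have hconst : 6 * C * γ ^ b ≤ 1 := by
    have h3d : (1 : ℝ) ≤ 3 ^ d := one_le_pow₀ (by norm_num)
    refine hsmall.trans' (mul_le_mul_of_nonneg_right ?_ (by positivity))
    nlinarith [C.coe_nonneg]
  calc ∫ u, (eigCount d γ Λ u E δ : ℝ) ∂(Measure.pi fun _ : Λ => μ)
      ≤ 24 * C * Λ.card * (δ / 2) ^ (8 * b) :=
        integral_eigCount_le hμ hσ hC (by positivity) hb₁ hγ.le hhop Λ E hδ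
    _ ≤ 24 * C * Λ.card * δ ^ (8 * b) := by
        gcongr
        linarith
    _ = 4 * Λ.card * (6 * C * δ ^ (8 * b)) := by ring
    _ ≤ _ := by
        gcongr
        exact mul_rpow_le_exp_neg hγ hγ₁ hδ hδγ hb.le (by positivity) hconst

/-- density of states estimate. There are `b, γ₀ > 0` such that for all
`0 < γ ≤ γ₀`, `0 < δ ≤ γ^{1/4}`, every rectangle `Λ` and every `E`:
`𝔼 N([E-δ/2, E+δ/2]) ≤ 4|Λ|·exp(-b·|log γ|^{2/3}·|log δ|^{1/3})`. -/
theorem density_of_states (d : ℕ) (hd : 1 ≤ d) :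
    ∃ b γ₀ : ℝ, 0 < b ∧ 0 < γ₀ ∧
      ∀ γ : ℝ, 0 < γ → γ ≤ γ₀ →
      ∀ δ : ℝ, 0 < δ → δ ≤ γ ^ ((1 : ℝ) / 4) →
      ∀ Λ : Finset (Fin d → ℤ), (∃ a b', Λ = Finset.Icc a b') →
      ∀ E : ℝ,
      ∫ u, (eigCount d γ Λ u E δ : ℝ) ∂(unifPi {x // x ∈ Λ}) ≤
        4 * (Λ.card : ℝ) *
          Real.exp (-(b * |Real.log γ| ^ ((2 : ℝ) / 3) * |Real.log δ| ^ ((1 : ℝ) / 3))) := by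
  obtain ⟨b, γ₀, hb, hγ₀, h⟩ :=
    density_of_states_general d one_half_pos
      (isFractionallyRegular_unif one_half_pos one_half_lt_one)
  exact ⟨b, γ₀, hb, hγ₀, fun γ hγ hγγ₀ δ hδ hδγ Λ _ => h γ hγ hγγ₀ δ hδ hδγ Λ⟩
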